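/- Let G be a group acting without edge inversions on a simplicial tree T, let g ∈ G be elliptic, let h ∈ G be hyperbolic, and let ℓ be a nonzero integer such that Fix(g^ℓ) ∩ Axis(h) = ∅. Then for every integer p ≥ 1, the minimal simplicial distance between the sets Fix(g^ℓ) and Fix(h^p·g^ℓ·h^{−p}) is at least p·τ(h) + 2; in particular these two sets are disjoint. -/

import Mathlib

/-!
The argument works for any geodesically convex set `S` of vertices that misses `Axis h`; its main
input is that triangles in a tree are tripods, so that `[a, b]` lies in `[a, z] ∪ [z, b]`. The axis
is convex, hence gated, and all points of `S` have the same gate `a` on it: otherwise a geodesic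
between two of them would run through both gates, and `S` would meet the axis by convexity.
Translating by `h ^ p`, the gate of every point of `h ^ p • S` is `h ^ p • a`, so a geodesic from
`S` to `h ^ p • S` runs through `a` and `h ^ p • a`, each of which is at distance at least one from
the corresponding set. The distance between these two vertices is `p * transLen T h`: since `h`
inverts no edge, the geodesics from `h ^ n • a` to `h ^ (n + 1) • a` follow one another without
backtracking.
-/

open SimpleGraph Pointwise

section TreeDefs

variable {G : Type*} [Group G]

/-- The action of `G` on the vertices preserves adjacency. -/
def ActsByAut (G : Type*) [Group G] {V : Type*} [MulAction G V] (T : SimpleGraph V) : Prop :=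
  ∀ (g : G) (v w : V), T.Adj v w → T.Adj (g • v) (g • w)

/-- The action has no edge inversions: no element swaps the endpoints of an edge. -/
def NoEdgeInversion (G : Type*) [Group G] {V : Type*} [MulAction G V] (T : SimpleGraph V) : Prop :=
  ∀ (g : G) (v w : V), T.Adj v w → ¬(g • v = w ∧ g • w = v)

/-- The set of vertices fixed by `g`. -/
def Fixed (V : Type*) [MulAction G V] (g : G) : Set V := {v | g • v = v}

/-- `g` is elliptic: it fixes some vertex. -/
def IsElliptic (V : Type*) [MulAction G V] (g : G) : Prop := ∃ v : V, g • v = v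

/-- `g` is hyperbolic: it fixes no vertex. -/
def IsHyperbolic (V : Type*) [MulAction G V] (g : G) : Prop := ¬ ∃ v : V, g • v = v

/-- Translation length of `g`: the infimum of `d(v, g • v)` over all vertices `v`. -/
noncomputable def transLen {V : Type*} [MulAction G V] (T : SimpleGraph V) (g : G) : ℕ :=
  ⨅ v : V, T.dist v (g • v)

/-- The axis of a (hyperbolic) element: the vertices moved exactly the translation length. -/
noncomputable def Axis {V : Type*} [MulAction G V] (T : SimpleGraph V) (g : G) : Set V :=
  {v | T.dist v (g • v) = transLen T g}

/-- Diameter (in `ℕ∞`) of a set of vertices: the sup of pairwise simplicial distances. -/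
noncomputable def setDiam {V : Type*} (T : SimpleGraph V) (S : Set V) : ℕ∞ :=
  ⨆ v ∈ S, ⨆ w ∈ S, (T.dist v w : ℕ∞)

/-- Minimal simplicial distance between two sets of vertices. -/
noncomputable def setDist {V : Type*} (T : SimpleGraph V) (A B : Set V) : ℕ :=
  sInf {n : ℕ | ∃ v ∈ A, ∃ w ∈ B, T.dist v w = n}

/-- The action of `G` on `T` is `k`-acylindrical: the fixed-point set of every nontrivial
elliptic element has diameter at most `k`. -/
def AcylindricalAction {V : Type*} (T : SimpleGraph V) (G : Type*) [Group G] [MulAction G V]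
    (k : ℕ) : Prop :=
  ∀ g : G, g ≠ 1 → IsElliptic V g → setDiam T (Fixed V g) ≤ (k : ℕ∞)

/-- `a` and `b` generate a rank 2 free product in `G`: the canonical homomorphism
`⟨a⟩ ∗ ⟨b⟩ → G` from the free product of the cyclic subgroups generated by `a` and `b`
is injective. -/
def IsRank2FreeProduct {G : Type*} [Group G] (a b : G) : Prop :=
  Function.Injective
    (Monoid.Coprod.lift (Subgroup.zpowers a).subtype (Subgroup.zpowers b).subtype)

/-- `a` and `b` freely generate a rank 2 free subgroup of `G`: the homomorphism from the
free group on two generators sending the generators to `a` and `b` is injective. -/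
def FreelyGeneratesFreeSubgroup {G : Type*} [Group G] (a b : G) : Prop :=
  Function.Injective ((FreeGroup.lift (fun i : Bool => if i then a else b)) : FreeGroup Bool →* G)

/-- `a` and `b` freely generate a rank 2 free subsemigroup of `G`: the monoid homomorphism
from the free monoid on two generators sending the generators to `a` and `b` is injective. -/
def FreelyGeneratesFreeSubsemigroup {G : Type*} [Monoid G] (a b : G) : Prop :=
  Function.Injective ((FreeMonoid.lift (fun i : Bool => if i then a else b)) : FreeMonoid Bool →* G)

/-- A line in a simplicial tree: the image of an isometric embedding of `ℤ`. -/
def IsLine {V : Type*} (T : SimpleGraph V) (L : Set V) : Prop :=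
  ∃ f : ℤ → V, (∀ m n : ℤ, T.dist (f m) (f n) = (m - n).natAbs) ∧ L = Set.range f

end TreeDefs

section Geodesics

variable {V : Type*} {T : SimpleGraph V} {a b m u v w x y z : V}

/-- `m` lies on a geodesic from `a` to `b`, expressed as equality in the triangle inequality. This
is meant for connected graphs, since `T.dist` vanishes between different components. -/
def GeodBetween (T : SimpleGraph V) (a m b : V) : Prop :=
  T.dist a m + T.dist m b = T.dist a b

lemma GeodBetween.symm (h : GeodBetween T a m b) : GeodBetween T b m a := by
  rw [GeodBetween, T.dist_comm (u := b) (v := m), T.dist_comm (u := m) (v := a),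
    T.dist_comm (u := b) (v := a), add_comm]
  exact h

lemma geodBetween_iff_exists_walk (hT : T.Connected) :
    GeodBetween T a m b ↔ ∃ p : T.Walk a b, p.length = T.dist a b ∧ m ∈ p.support := by
  classical
  constructor
  · intro h
    obtain ⟨p, hp⟩ := hT.exists_walk_length_eq_dist a m
    obtain ⟨q, hq⟩ := hT.exists_walk_length_eq_dist m b
    exact ⟨p.append q, by rw [Walk.length_append, hp, hq, h], by simp⟩
  · rintro ⟨p, hp, hm⟩
    rw [GeodBetween, ← length_eq_dist_of_subwalk hp (p.isSubwalk_takeUntil hm),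
      ← length_eq_dist_of_subwalk hp (p.isSubwalk_dropUntil hm), ← hp, ← Walk.length_append,
      p.take_spec hm]

lemma exists_adj_geodBetween (hT : T.Connected) (hab : a ≠ b) :
    ∃ m, T.Adj a m ∧ GeodBetween T a m b := by
  obtain ⟨p, hp⟩ := hT.exists_walk_length_eq_dist a b
  have hnil : ¬p.Nil := Walk.not_nil_of_ne hab
  exact ⟨p.snd, p.adj_snd hnil,
    (geodBetween_iff_exists_walk hT).2 ⟨p, hp, p.getVert_mem_support 1⟩⟩

lemma GeodBetween.left_or_right (hT : T.IsTree) (h : GeodBetween T a m b) (z : V) :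
    GeodBetween T a m z ∨ GeodBetween T z m b := by
  classical
  obtain ⟨r, hr, hm⟩ := (geodBetween_iff_exists_walk hT.connected).1 h
  obtain ⟨p, hp⟩ := hT.connected.exists_walk_length_eq_dist a z
  obtain ⟨q, hq⟩ := hT.connected.exists_walk_length_eq_dist z b
  have hbypass : r = (p.append q).bypass :=
    (hT.existsUnique_path a b).unique (r.isPath_of_length_eq_dist hr) (Walk.bypass_isPath _)
  have hsupport : m ∈ (p.append q).support :=
    (p.append q).support_bypass_subset_support (hbypass ▸ hm)
  rw [geodBetween_iff_exists_walk hT.connected, geodBetween_iff_exists_walk hT.connected]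
  exact ((Walk.mem_support_append_iff p q).1 hsupport).imp (⟨p, hp, ·⟩) (⟨q, hq, ·⟩)

lemma GeodBetween.concat (hT : T.IsTree) (hxyz : GeodBetween T x y z) (hyzw : GeodBetween T y z w)
    (hyz : y ≠ z) : GeodBetween T x z w := by
  refine (hyzw.left_or_right hT x).resolve_left fun hyzx ↦ ?_
  have hpos := hT.connected.pos_dist_of_ne hyz
  have hzyx := hxyz.symm
  simp only [GeodBetween, T.dist_comm (u := z) (v := y), T.dist_comm (u := z) (v := x),
    T.dist_comm (u := y) (v := x)] at hyzx hzyx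
  omega

lemma geodBetween_or_geodBetween_of_adj (hT : T.IsTree) (u : V) (h : T.Adj v w) :
    GeodBetween T u v w ∨ GeodBetween T u w v := by
  have hvw := dist_eq_one_iff_adj.2 h
  have hwv := dist_eq_one_iff_adj.2 h.symm
  have hstep := hT.dist_eq_dist_add_one_of_adj u h
  simp only [GeodBetween]
  omega

lemma dist_le_max_of_geodBetween (hT : T.IsTree) {a' b' m' : V} (h : GeodBetween T a m b)
    (h' : GeodBetween T a' m' b') (ha : T.dist a m ≤ T.dist a' m')
    (hb : T.dist m b ≤ T.dist m' b') : T.dist m m' ≤ max (T.dist a a') (T.dist b b') := by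
  -- Reversing both geodesics reduces the claim to the case that `m` lies between `a` and `m'`.
  have left_case : ∀ {a b m a' b' m' : V}, GeodBetween T a m b → GeodBetween T a' m' b' →
      T.dist m b ≤ T.dist m' b' → GeodBetween T a m m' →
      T.dist m m' ≤ max (T.dist a a') (T.dist b b') := by
    intro a b m a' b' m' h h' hb hm
    have hcases := h'.left_or_right hT a
    have htri := hT.connected.dist_triangle (u := a) (v := b) (w := b')
    simp only [GeodBetween, T.dist_comm (u := m') (v := a), T.dist_comm (u := a') (v := a)]
      at h hm hcases
    omega
  rcases h.left_or_right hT m' with hm | hm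
  · exact left_case h h' hb hm
  · rw [max_comm]
    refine left_case h.symm h'.symm ?_ hm.symm
    rwa [T.dist_comm (u := m), T.dist_comm (u := m')]

end Geodesics

section Convexity

variable {V : Type*} {T : SimpleGraph V} {S X : Set V} {a b v w : V}

/-- A set of vertices is geodesically convex if it contains every vertex lying on a geodesic between
two of its elements; in a tree, this says that it spans a subtree or is empty. -/
def IsGeodConvex (T : SimpleGraph V) (S : Set V) : Prop :=
  ∀ ⦃a⦄, a ∈ S → ∀ ⦃b⦄, b ∈ S → ∀ ⦃m⦄, GeodBetween T a m b → m ∈ S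

/-- `a` is the gate of `v` in `X`: a vertex of `X` through which a geodesic from `v` to any given
vertex of `X` passes. It plays the role of the nearest-point projection of `v` to `X`. -/
def IsGate (T : SimpleGraph V) (X : Set V) (v a : V) : Prop :=
  a ∈ X ∧ ∀ b ∈ X, GeodBetween T v a b

lemma IsGeodConvex.exists_isGate (hT : T.IsTree) (hX : IsGeodConvex T X) (hne : X.Nonempty)
    (v : V) : ∃ a, IsGate T X v a := by
  let a := Function.argminOn (T.dist v) X hne
  have haX : a ∈ X := Function.argminOn_mem _ _ _
  refine ⟨a, haX, fun b hb ↦ ?_⟩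
  rcases eq_or_ne a b with rfl | hab
  · simp [GeodBetween]
  obtain ⟨m, ham, hamb⟩ := exists_adj_geodBetween hT.connected hab
  have hle : T.dist v a ≤ T.dist v m := Function.argminOn_le _ _ (hX haX hb hamb)
  rcases geodBetween_or_geodBetween_of_adj hT v ham with hvam | hvma
  · have hvmb := hvam.concat hT hamb ham.ne
    simp only [GeodBetween] at hamb hvam hvmb ⊢
    omega
  · have hma := dist_eq_one_iff_adj.2 ham.symm
    simp only [GeodBetween] at hvma
    omega

lemma IsGate.dist_eq (hT : T.IsTree) (ha : IsGate T X v a) (hb : IsGate T X w b) (hab : a ≠ b) :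
    T.dist v w = T.dist v a + T.dist a b + T.dist b w := by
  have hvab : GeodBetween T v a b := ha.2 b hb.1
  have hvbw : GeodBetween T v b w := hvab.concat hT (hb.2 a ha.1).symm hab
  rw [hvab, hvbw]

lemma IsGate.eq_of_disjoint (hT : T.IsTree) (hS : IsGeodConvex T S) (hSX : Disjoint S X)
    (hv : v ∈ S) (hw : w ∈ S) (ha : IsGate T X v a) (hb : IsGate T X w b) : a = b := by
  by_contra hab
  have hwaw : GeodBetween T w a v :=
    (hb.2 a ha.1).concat hT (ha.2 b hb.1).symm (Ne.symm hab)
  exact hSX.notMem_of_mem_left (hS hw hv hwaw) ha.1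

end Convexity

section SetDist

variable {V : Type*} {T : SimpleGraph V} {A B : Set V} {n : ℕ}

lemma le_setDist (hA : A.Nonempty) (hB : B.Nonempty) (h : ∀ v ∈ A, ∀ w ∈ B, n ≤ T.dist v w) :
    n ≤ setDist T A B := by
  obtain ⟨v, hv⟩ := hA
  obtain ⟨w, hw⟩ := hB
  refine le_csInf ⟨_, v, hv, w, hw, rfl⟩ ?_
  rintro _ ⟨v, hv, w, hw, rfl⟩
  exact h v hv w hw

lemma disjoint_of_forall_dist_pos (h : ∀ v ∈ A, ∀ w ∈ B, 0 < T.dist v w) : Disjoint A B :=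
  Set.disjoint_left.2 fun v hA hB ↦ (h v hA v hB).ne' T.dist_self

end SetDist

section Action

variable {G V : Type*} [Group G] [MulAction G V] {T : SimpleGraph V} {X : Set V} {h k : G}
  {a b m v : V}

lemma ActsByAut.edist_smul_le (hAct : ActsByAut G T) (k : G) (v w : V) :
    T.edist (k • v) (k • w) ≤ T.edist v w := by
  let f : T →g T := ⟨(k • ·), hAct k _ _⟩
  exact le_iInf fun p ↦ (edist_le (p.map f)).trans_eq (by rw [Walk.length_map])

lemma ActsByAut.dist_smul (hAct : ActsByAut G T) (k : G) (v w : V) :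
    T.dist (k • v) (k • w) = T.dist v w := by
  have hge := hAct.edist_smul_le k⁻¹ (k • v) (k • w)
  rw [inv_smul_smul, inv_smul_smul] at hge
  exact congrArg ENat.toNat ((hAct.edist_smul_le k v w).antisymm hge)

lemma GeodBetween.smul (hAct : ActsByAut G T) (k : G) (h : GeodBetween T a m b) :
    GeodBetween T (k • a) (k • m) (k • b) := by
  simpa only [GeodBetween, hAct.dist_smul] using h

lemma IsGate.smul (hAct : ActsByAut G T) (k : G) (h : IsGate T X v a) :
    IsGate T (k • X) (k • v) (k • a) := by
  refine ⟨Set.smul_mem_smul_set h.1, ?_⟩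
  rintro _ ⟨b, hb, rfl⟩
  exact (h.2 b hb).smul hAct k

lemma isGeodConvex_setOf_dist_smul_le (hT : T.IsTree) (hAct : ActsByAut G T) (k : G) (c : ℕ) :
    IsGeodConvex T {v : V | T.dist v (k • v) ≤ c} := fun _ ha _ hb _ hm ↦
  (dist_le_max_of_geodBetween hT hm (hm.smul hAct k) (hAct.dist_smul ..).ge
    (hAct.dist_smul ..).ge).trans (max_le ha hb)

lemma isGeodConvex_fixed (hT : T.IsTree) (hAct : ActsByAut G T) (k : G) :
    IsGeodConvex T (Fixed V k) := by
  convert isGeodConvex_setOf_dist_smul_le hT hAct k 0 using 1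
  ext v
  simp [Fixed, hT.connected.dist_eq_zero_iff, eq_comm]

lemma transLen_le_dist (T : SimpleGraph V) (k : G) (v : V) : transLen T k ≤ T.dist v (k • v) :=
  ciInf_le (OrderBot.bddBelow _) v

lemma isGeodConvex_axis (hT : T.IsTree) (hAct : ActsByAut G T) (k : G) :
    IsGeodConvex T (Axis T k) := by
  convert isGeodConvex_setOf_dist_smul_le hT hAct k (transLen T k) using 1
  ext v
  exact (transLen_le_dist T k v).ge_iff_eq'.symm

lemma axis_nonempty [Nonempty V] (T : SimpleGraph V) (k : G) : (Axis T k).Nonempty :=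
  Nat.sInf_mem (Set.range_nonempty fun v : V ↦ T.dist v (k • v))

lemma smul_mem_axis_iff_of_commute (hAct : ActsByAut G T) (hkh : Commute k h) :
    k • v ∈ Axis T h ↔ v ∈ Axis T h := by
  simp only [Axis, Set.mem_ofPred_eq, ← mul_smul, ← hkh.eq]
  rw [mul_smul, hAct.dist_smul]

lemma smul_axis_of_commute (hAct : ActsByAut G T) (hkh : Commute k h) :
    k • Axis T h = Axis T h := by
  ext v
  rw [Set.mem_smul_set_iff_inv_smul_mem, smul_mem_axis_iff_of_commute hAct hkh.inv_left]

lemma IsHyperbolic.transLen_pos (hT : T.Connected) (hh : IsHyperbolic V h) : 0 < transLen T h := by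
  have := hT.nonempty
  obtain ⟨a, ha⟩ := axis_nonempty T h
  rw [← show T.dist a (h • a) = transLen T h from ha]
  exact hT.pos_dist_of_ne fun hfix ↦ hh ⟨a, hfix.symm⟩

lemma IsHyperbolic.geodBetween_smul_smul (hT : T.IsTree) (hAct : ActsByAut G T)
    (hNoInv : NoEdgeInversion G T) (hh : IsHyperbolic V h) (ha : a ∈ Axis T h) :
    GeodBetween T a (h • a) (h • h • a) := by
  have hne : h • a ≠ a := fun hfix ↦ hh ⟨a, hfix⟩
  obtain ⟨m, hadj, hm⟩ := exists_adj_geodBetween hT.connected hne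
  rcases geodBetween_or_geodBetween_of_adj hT (h • h • a) hadj with hforward | hback
  · exact hm.symm.concat hT hforward.symm hadj.ne'
  -- If the geodesic backtracked from `h • a` to `m`, then `m` would be moved less than `a`,
  -- except in the extreme case that `h` inverts the edge from `a` to `h • a`.
  exfalso
  have hda : T.dist a (h • a) = transLen T h := ha
  have hdha : T.dist (h • h • a) (h • a) = transLen T h := by
    rw [T.dist_comm, hAct.dist_smul, hda]
  have hdm : T.dist m (h • a) = 1 := dist_eq_one_iff_adj.2 hadj.symm
  have hdhm : T.dist (h • h • a) (h • m) = 1 := by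
    rw [hAct.dist_smul, T.dist_comm, hdm]
  have hmin := transLen_le_dist T h m
  rcases (hm.smul hAct h).left_or_right hT m with hshort | hend
  · simp only [GeodBetween, T.dist_comm (u := h • m) (v := m)] at hback hshort
    omega
  · simp only [GeodBetween] at hback hend
    have hma : m = a := smul_left_cancel h (hT.connected.dist_eq_zero_iff.1 (by omega))
    subst hma
    exact hNoInv h m (h • m) hadj.symm ⟨rfl, hT.connected.dist_eq_zero_iff.1 (by omega)⟩

lemma IsHyperbolic.geodBetween_pow_smul (hT : T.IsTree) (hAct : ActsByAut G T)
    (hNoInv : NoEdgeInversion G T) (hh : IsHyperbolic V h) (ha : a ∈ Axis T h) (n : ℕ) :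
    GeodBetween T a (h ^ n • a) (h ^ (n + 1) • a) := by
  induction n with
  | zero => simp [GeodBetween]
  | succ n ih =>
    refine ih.concat hT ?_ ?_
    · have hstep := (hh.geodBetween_smul_smul hT hAct hNoInv ha).smul hAct (h ^ n)
      rwa [← mul_smul, ← mul_smul, ← mul_smul, ← pow_succ, ← pow_succ] at hstep
    · rw [pow_succ, mul_smul]
      exact fun hfix ↦ hh ⟨a, (smul_left_cancel _ hfix).symm⟩

lemma IsHyperbolic.dist_pow_smul (hT : T.IsTree) (hAct : ActsByAut G T)
    (hNoInv : NoEdgeInversion G T) (hh : IsHyperbolic V h) (ha : a ∈ Axis T h) (n : ℕ) :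
    T.dist a (h ^ n • a) = n * transLen T h := by
  induction n with
  | zero => simp
  | succ n ih =>
    have hda : T.dist a (h • a) = transLen T h := ha
    rw [← hh.geodBetween_pow_smul hT hAct hNoInv ha n, ih, pow_succ, mul_smul, hAct.dist_smul, hda]
    ring

lemma fixed_conj (g k : G) : Fixed V (k * g * k⁻¹) = k • Fixed V g :=
  (MulAction.smul_fixedBy V g k).symm

lemma IsElliptic.nonempty_fixed_zpow {g : G} (hg : IsElliptic V g) (l : ℤ) :
    (Fixed V (g ^ l)).Nonempty :=
  Set.Nonempty.mono (MulAction.fixedBy_subset_fixedBy_zpow V g l) hg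

lemma IsHyperbolic.le_dist_of_disjoint_axis (hT : T.IsTree) (hAct : ActsByAut G T)
    (hNoInv : NoEdgeInversion G T) (hh : IsHyperbolic V h) {S : Set V} (hS : IsGeodConvex T S)
    (hdisj : Disjoint S (Axis T h)) {p : ℕ} (hp : 1 ≤ p) {u : V} (hv : v ∈ S) (hu : u ∈ S) :
    p * transLen T h + 2 ≤ T.dist v (h ^ p • u) := by
  have := hT.connected.nonempty
  have hgate := (isGeodConvex_axis hT hAct h).exists_isGate hT (axis_nonempty T h)
  obtain ⟨a, ha⟩ := hgate v
  obtain ⟨b, hb⟩ := hgate u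
  obtain rfl : a = b := ha.eq_of_disjoint hT hS hdisj hv hu hb
  have hhb : IsGate T (Axis T h) (h ^ p • u) (h ^ p • a) := by
    simpa only [smul_axis_of_commute hAct (Commute.pow_self h p)] using hb.smul hAct (h ^ p)
  have htrans := hh.dist_pow_smul hT hAct hNoInv ha.1 p
  have hne : a ≠ h ^ p • a := fun hfix ↦ by
    rw [← hfix, T.dist_self] at htrans
    exact (Nat.mul_pos hp (hh.transLen_pos hT.connected)).ne htrans
  have hva : 0 < T.dist v a := hT.connected.pos_dist_of_ne (hdisj.ne_of_mem hv ha.1)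
  have hau : 0 < T.dist a u := hT.connected.pos_dist_of_ne (hdisj.ne_of_mem hu ha.1).symm
  rw [ha.dist_eq hT hhb hne, htrans, hAct.dist_smul]
  omega

end Action

theorem statement14_general {G V : Type*} [Group G] [MulAction G V] {T : SimpleGraph V}
    (hT : T.IsTree) (hAct : ActsByAut G T) (hNoInv : NoEdgeInversion G T) {h : G}
    (hh : IsHyperbolic V h) {S : Set V} (hne : S.Nonempty) (hS : IsGeodConvex T S)
    (hdisj : S ∩ Axis T h = ∅) {p : ℕ} (hp : 1 ≤ p) :
    p * transLen T h + 2 ≤ setDist T S (h ^ p • S) ∧ S ∩ h ^ p • S = ∅ := by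
  have hdist : ∀ v ∈ S, ∀ w ∈ h ^ p • S, p * transLen T h + 2 ≤ T.dist v w := by
    rintro v hv _ ⟨u, hu, rfl⟩
    exact hh.le_dist_of_disjoint_axis hT hAct hNoInv hS (Set.disjoint_iff_inter_eq_empty.2 hdisj)
      hp hv hu
  exact ⟨le_setDist hne hne.smul_set hdist, (disjoint_of_forall_dist_pos fun v hv w hw ↦
    Nat.lt_of_lt_of_le (Nat.succ_pos _) (hdist v hv w hw)).inter_eq⟩

/-- If `G` acts without edge inversions on a simplicial tree, `g` is
elliptic, `h` is hyperbolic, `ℓ ≠ 0` and `Fix(g^ℓ) ∩ Axis(h) = ∅`, then for every `p ≥ 1`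
the distance between `Fix(g^ℓ)` and `Fix(h^p * g^ℓ * h^(-p))` is at least `p·τ(h) + 2`;
in particular the two sets are disjoint. -/
theorem statement14 {G V : Type*} [Group G] [MulAction G V] (T : SimpleGraph V)
    (hT : T.IsTree) (hAct : ActsByAut G T) (hNoInv : NoEdgeInversion G T)
    (g h : G) (hg : IsElliptic V g) (hh : IsHyperbolic V h)
    (l : ℤ) (hl : l ≠ 0)
    (hdisj : Fixed V (g ^ l) ∩ Axis T h = (∅ : Set V))
    (p : ℕ) (hp : 1 ≤ p) :
    p * transLen T h + 2 ≤
        setDist T (Fixed V (g ^ l)) (Fixed V (h ^ p * g ^ l * (h ^ p)⁻¹)) ∧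
      Fixed V (g ^ l) ∩ Fixed V (h ^ p * g ^ l * (h ^ p)⁻¹) = (∅ : Set V) := by
  rw [fixed_conj]
  exact statement14_general hT hAct hNoInv hh (hg.nonempty_fixed_zpow l)
    (isGeodConvex_fixed hT hAct (g ^ l)) hdisj hp
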